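/- Under the decoy-state assumptions with error rates, the following hold: EQ(ν₁)·e^{ν₁} − EQ(ν₂)·e^{ν₂} = e(1)·(ν₁ − ν₂)·Y(1) + Σ_{i=2}^∞ e(i)·(ν₁^i − ν₂^i)·Y(i)/i!, and consequently EQ(ν₁)·e^{ν₁} − EQ(ν₂)·e^{ν₂} ≥ e(1)·(ν₁ − ν₂)·Y(1). -/

import Mathlib

/-- The gain for intensity `m` with yields `Y`: Poisson average of the yields. -/
noncomputable def decoyGain (Y : ℕ → ℝ) (m : ℝ) : ℝ :=
  ∑' i : ℕ, Real.exp (-m) * m ^ i / (Nat.factorial i) * Y i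

/-- The error-weighted gain for intensity `m` with yields `Y` and error rates `e`. -/
noncomputable def decoyErrGain (Y e : ℕ → ℝ) (m : ℝ) : ℝ :=
  ∑' i : ℕ, Real.exp (-m) * m ^ i / (Nat.factorial i) * (e i * Y i)

/-!
The error-weighted gain is the gain of the yields `e i * Y i`. Multiplying a gain at intensity `m`
by `exp m` cancels the Poisson normalisation and leaves `∑ mⁱ / i! · Y i`. In the difference of two
such series the vacuum terms cancel, the single-photon term is `(ν₁ - ν₂) * Y 1`, and the
multi-photon terms are nonnegative because `ν₂ⁱ ≤ ν₁ⁱ`.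
-/

open Nat (factorial)

section Summability

variable {w : ℕ → ℝ}

theorem summable_pow_div_factorial_mul_of_bounded {C : ℝ} (hw : ∀ i, |w i| ≤ C) (x : ℝ) :
    Summable fun i ↦ x ^ i / factorial i * w i := by
  refine .of_norm_bounded ((Real.summable_pow_div_factorial |x|).mul_right C) fun i ↦ ?_
  rw [norm_mul, norm_div, norm_pow, Real.norm_natCast, Real.norm_eq_abs, Real.norm_eq_abs]
  gcongr
  exact hw i

theorem summable_pow_div_factorial_mul_of_abs_le_abs {x y : ℝ} (hyx : |y| ≤ |x|)
    (hx : Summable fun i ↦ x ^ i / factorial i * w i) :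
    Summable fun i ↦ y ^ i / factorial i * w i := by
  refine .of_norm_bounded hx.norm fun i ↦ ?_
  simp only [norm_mul, norm_div, norm_pow, Real.norm_eq_abs]
  gcongr

end Summability

section Gain

variable {Y : ℕ → ℝ} {ν₁ ν₂ : ℝ}

theorem decoyErrGain_eq_decoyGain (Y e : ℕ → ℝ) (m : ℝ) :
    decoyErrGain Y e m = decoyGain (e * Y) m :=
  rfl

theorem decoyGain_mul_exp (Y : ℕ → ℝ) (m : ℝ) :
    decoyGain Y m * Real.exp m = ∑' i, m ^ i / factorial i * Y i := by
  rw [decoyGain, ← tsum_mul_right]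
  refine tsum_congr fun i ↦ ?_
  rw [Real.exp_neg]
  field_simp

theorem decoyGain_mul_exp_sub
    (h₁ : Summable fun i ↦ ν₁ ^ i / factorial i * Y i)
    (h₂ : Summable fun i ↦ ν₂ ^ i / factorial i * Y i) :
    decoyGain Y ν₁ * Real.exp ν₁ - decoyGain Y ν₂ * Real.exp ν₂ =
      (ν₁ - ν₂) * Y 1 +
        ∑' i, (ν₁ ^ (i + 2) - ν₂ ^ (i + 2)) / factorial (i + 2) * Y (i + 2) := by
  rw [decoyGain_mul_exp, decoyGain_mul_exp, ← h₁.tsum_sub h₂]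
  simp only [← sub_mul, ← sub_div]
  have hsub : Summable fun i ↦ (ν₁ ^ i - ν₂ ^ i) / factorial i * Y i := by
    simpa only [sub_div, sub_mul] using h₁.sub h₂
  rw [← hsub.sum_add_tsum_nat_add 2]
  simp [Finset.sum_range_succ]

theorem tsum_pow_sub_pow_div_factorial_mul_nonneg (hY : ∀ i, 0 ≤ Y i) (hν : |ν₂| ≤ ν₁) (k : ℕ) :
    0 ≤ ∑' i, (ν₁ ^ (i + k) - ν₂ ^ (i + k)) / factorial (i + k) * Y (i + k) := by
  refine tsum_nonneg fun i ↦ mul_nonneg (div_nonneg (sub_nonneg.2 ?_) (by positivity)) (hY _)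
  calc ν₂ ^ (i + k) ≤ |ν₂| ^ (i + k) := (le_abs_self _).trans_eq (abs_pow _ _)
    _ ≤ ν₁ ^ (i + k) := by gcongr

end Gain

theorem error_gain_identity_and_bound_general {Y e : ℕ → ℝ} {ν₁ ν₂ : ℝ}
    (heY : ∀ i, 0 ≤ e i * Y i) (hν : |ν₂| ≤ ν₁)
    (hsum : Summable fun i ↦ ν₁ ^ i / factorial i * (e i * Y i)) :
    (decoyErrGain Y e ν₁ * Real.exp ν₁ - decoyErrGain Y e ν₂ * Real.exp ν₂
        = e 1 * ((ν₁ - ν₂) * Y 1)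
          + ∑' i : ℕ, e (i + 2) * (ν₁ ^ (i + 2) - ν₂ ^ (i + 2)) * Y (i + 2)
              / (Nat.factorial (i + 2))) ∧
      decoyErrGain Y e ν₁ * Real.exp ν₁ - decoyErrGain Y e ν₂ * Real.exp ν₂
        ≥ e 1 * ((ν₁ - ν₂) * Y 1) := by
  have hsum₂ := summable_pow_div_factorial_mul_of_abs_le_abs (hν.trans (le_abs_self ν₁)) hsum
  have identity := decoyGain_mul_exp_sub (Y := e * Y) hsum hsum₂
  have tail_nonneg := tsum_pow_sub_pow_div_factorial_mul_nonneg (Y := e * Y) heY hν 2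
  simp only [decoyErrGain_eq_decoyGain]
  have single_photon : (ν₁ - ν₂) * (e * Y) 1 = e 1 * ((ν₁ - ν₂) * Y 1) := mul_left_comm _ _ _
  rw [identity, single_photon]
  refine ⟨?_, le_add_of_nonneg_right tail_nonneg⟩
  congr 1
  refine tsum_congr fun i ↦ ?_
  rw [Pi.mul_apply]
  ring

theorem error_gain_identity_and_bound (Y e : ℕ → ℝ)
    (hY : ∀ i, 0 ≤ Y i ∧ Y i ≤ 1) (he : ∀ i, 0 ≤ e i ∧ e i ≤ 1)
    (μ ν₁ ν₂ : ℝ) (hν₂ : 0 ≤ ν₂) (hν : ν₂ < ν₁) (hμ : ν₁ + ν₂ < μ) :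
    (decoyErrGain Y e ν₁ * Real.exp ν₁ - decoyErrGain Y e ν₂ * Real.exp ν₂
        = e 1 * ((ν₁ - ν₂) * Y 1)
          + ∑' i : ℕ, e (i + 2) * (ν₁ ^ (i + 2) - ν₂ ^ (i + 2)) * Y (i + 2)
              / (Nat.factorial (i + 2))) ∧
      decoyErrGain Y e ν₁ * Real.exp ν₁ - decoyErrGain Y e ν₂ * Real.exp ν₂
        ≥ e 1 * ((ν₁ - ν₂) * Y 1) :=
  have heY i : 0 ≤ e i * Y i := mul_nonneg (he i).1 (hY i).1
  have heY_le i : |e i * Y i| ≤ 1 :=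
    (abs_of_nonneg (heY i)).trans_le (mul_le_one₀ (he i).2 (hY i).1 (hY i).2)
  error_gain_identity_and_bound_general heY ((abs_of_nonneg hν₂).trans_le hν.le)
    (summable_pow_div_factorial_mul_of_bounded heY_le ν₁)
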